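/- Let G be a negative definite symmetric integer matrix on a finite set V, let v ∈ V, let K be a characteristic vector, and let E ⊆ V with v ∉ E. Suppose i₀ ∈ ℤ maximizes the function i ↦ h_U([K+iv, E]). If i₀ > 0, then h_U([K, E∪{v}]) = h_U([K,E]) (equivalently, h_U([K+v,E]) ≥ h_U([K,E])); if i₀ < 0, then h_U([K−v, E∪{v}]) = h_U([K,E]) (equivalently, h_U([K−v,E]) ≥ h_U([K,E])). -/

import Mathlib

/-! Along the line `i ↦ K + iv` each vertex height `h_U(K + iv + Σ_{u ∈ I} e_u)` is a quadratic
polynomial in `i` with leading coefficient `G v v < 0` (`exists_hU_eq_quadratic`, a consequence of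
`h_U(K + x) = h_U(K) + K·x + xᵀGx`). It is therefore concave, and so is the minimum over `I ⊆ E`,
which is `f i = h_U([K + iv, E])`. For `n ≥ 1` and a sign `ε`, the point `ε` divides the segment
from `0` to `εn` in the ratio `1 : (n - 1)`, so `n f(ε) ≥ (n - 1) f(0) + f(εn)`
(`hUcube_concave`). If `εn = i₀` is a maximum of `f`, then `f(εn) ≥ f(0)`, and hence
`f(ε) ≥ f(0)`. The statements about `[K, E ∪ {v}]` follow because the height of this cube is the
minimum of the heights of its faces `[K, E]` and `[K + v, E]` (`hUcube_insert`). -/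

open Matrix Finset

variable {V : Type*}

/-- Negative definiteness of a symmetric integer matrix, as a quadratic form over `ℚ`. -/
def MatNegDef [Fintype V] (G : Matrix V V ℤ) : Prop :=
  ∀ x : V → ℚ, x ≠ 0 → x ⬝ᵥ (G.map (Int.cast : ℤ → ℚ)).mulVec x < 0

/-- `K` is a characteristic vector for `G`: `K v ≡ G v v (mod 2)` for all `v`. -/
def IsCharacteristic [Fintype V] (G : Matrix V V ℤ) (K : V → ℤ) : Prop :=
  ∀ v : V, (2 : ℤ) ∣ (K v - G v v)

/-- The translate `K + x` of a characteristic vector by `x : V → ℤ`. -/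
def chTrans [Fintype V] (G : Matrix V V ℤ) (K : V → ℤ) (x : V → ℤ) : V → ℤ :=
  fun u => K u + 2 * G.mulVec x u

/-- `i` times the standard basis vector at `v`. -/
def dirVec [DecidableEq V] (v : V) (i : ℤ) : V → ℤ := fun u => if u = v then i else 0

/-- The height function `h_U(K) = (Kᵀ G⁻¹ K + s)/4`. -/
noncomputable def hU [Fintype V] [DecidableEq V] (G : Matrix V V ℤ) (K : V → ℤ) : ℚ :=
  ((fun u => (K u : ℚ)) ⬝ᵥ ((G.map (Int.cast : ℤ → ℚ))⁻¹).mulVec (fun u => (K u : ℚ))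
      + (Fintype.card V : ℚ)) / 4

/-- The height of a cube: `h_U([K,E]) = min_{I ⊆ E} h_U(K + Σ_{v ∈ I} e_v)`. -/
noncomputable def hUcube [Fintype V] [DecidableEq V] (G : Matrix V V ℤ) (K : V → ℤ)
    (E : Finset V) : ℚ :=
  E.powerset.inf' (Finset.powerset_nonempty _)
    (fun I => hU G (chTrans G K (fun u => if u ∈ I then (1 : ℤ) else 0)))

lemma MatNegDef.isUnit_det [Fintype V] [DecidableEq V] {G : Matrix V V ℤ} (hneg : MatNegDef G) :
    IsUnit (G.map (Int.cast : ℤ → ℚ)).det := by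
  rw [isUnit_iff_ne_zero]
  intro h
  obtain ⟨x, hx, hx0⟩ := Matrix.exists_mulVec_eq_zero_iff.mpr h
  have := hneg x hx
  simp [hx0] at this

lemma MatNegDef.diag_neg [Fintype V] [DecidableEq V] {G : Matrix V V ℤ} (hneg : MatNegDef G)
    (v : V) : (G v v : ℚ) < 0 := by
  simpa using hneg (Pi.single v 1) (by simp)

lemma chTrans_chTrans [Fintype V] (G : Matrix V V ℤ) (K x y : V → ℤ) :
    chTrans G (chTrans G K x) y = chTrans G K (x + y) := by
  funext u
  simp only [chTrans, Matrix.mulVec_add, Pi.add_apply]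
  ring

lemma dirVec_zero [DecidableEq V] (v : V) : dirVec v 0 = 0 := by
  funext u
  simp [dirVec]

lemma chTrans_zero [Fintype V] (G : Matrix V V ℤ) (K : V → ℤ) : chTrans G K 0 = K := by
  funext u
  simp [chTrans]

/-- `h_U(K + x) = h_U(K) + K·x + xᵀGx`; this is where symmetry and invertibility of `G` enter. -/
lemma hU_chTrans [Fintype V] [DecidableEq V] {G : Matrix V V ℤ} (hsym : G.IsSymm)
    (hneg : MatNegDef G) (K x : V → ℤ) :
    hU G (chTrans G K x) = hU G K + (fun u => (K u : ℚ)) ⬝ᵥ (fun u => (x u : ℚ))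
      + (fun u => (x u : ℚ)) ⬝ᵥ (G.map (Int.cast : ℤ → ℚ)).mulVec (fun u => (x u : ℚ)) := by
  have hdet := hneg.isUnit_det
  have hT : (G.map (Int.cast : ℤ → ℚ))ᵀ = G.map (Int.cast : ℤ → ℚ) := by
    rw [← Matrix.transpose_map, hsym.eq]
  have hcast : (fun u => ((chTrans G K x u : ℤ) : ℚ)) = (fun u => (K u : ℚ))
      + (2 : ℚ) • (G.map (Int.cast : ℤ → ℚ)).mulVec (fun u => (x u : ℚ)) := by
    funext u
    simp [chTrans, Matrix.mulVec, dotProduct]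
  unfold hU
  rw [hcast]
  generalize G.map (Int.cast : ℤ → ℚ) = A at *
  generalize (fun u => (K u : ℚ)) = k
  generalize (fun u => (x u : ℚ)) = y
  have h1 : A⁻¹ *ᵥ (A *ᵥ y) = y := by
    rw [Matrix.mulVec_mulVec, Matrix.nonsing_inv_mul _ hdet, Matrix.one_mulVec]
  have h2 : (A *ᵥ y) ⬝ᵥ (A⁻¹ *ᵥ k) = k ⬝ᵥ y := by
    rw [dotProduct_comm, Matrix.dotProduct_mulVec, ← Matrix.mulVec_transpose, hT,
      Matrix.mulVec_mulVec, Matrix.mul_nonsing_inv _ hdet, Matrix.one_mulVec]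
  rw [Matrix.mulVec_add, Matrix.mulVec_smul, h1]
  simp only [add_dotProduct, dotProduct_add, smul_dotProduct, dotProduct_smul, h2, smul_eq_mul]
  rw [dotProduct_comm (A *ᵥ y) y]
  ring

lemma exists_hU_eq_quadratic [Fintype V] [DecidableEq V] {G : Matrix V V ℤ} (hsym : G.IsSymm)
    (hneg : MatNegDef G) (K x : V → ℤ) (v : V) :
    ∃ a b : ℚ, ∀ i : ℤ,
      hU G (chTrans G (chTrans G K (dirVec v i)) x) = a + b * i + G v v * (i : ℚ) ^ 2 := by
  refine ⟨hU G (chTrans G K x), (chTrans G K x v : ℤ), fun i => ?_⟩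
  have hd : (fun u => ((dirVec v i u : ℤ) : ℚ)) = Pi.single v (i : ℚ) := by
    funext u
    by_cases h : u = v <;> simp [dirVec, h]
  rw [chTrans_chTrans, add_comm, ← chTrans_chTrans, hU_chTrans hsym hneg, hd]
  simp
  ring

/-- Concavity of `i ↦ h_U([K + iv, E])` at `0`, `ε`, `εn` with `ε` a sign, cleared of
denominators. -/
lemma hUcube_concave [Fintype V] [DecidableEq V] {G : Matrix V V ℤ} (hsym : G.IsSymm)
    (hneg : MatNegDef G) (K : V → ℤ) (v : V) (E : Finset V) {ε n : ℤ} (hε : ε ^ 2 = 1)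
    (hn : 1 ≤ n) :
    ((n : ℚ) - 1) * hUcube G K E + hUcube G (chTrans G K (dirVec v (ε * n))) E
      ≤ n * hUcube G (chTrans G K (dirVec v ε)) E := by
  -- It suffices to compare the three heights at a vertex `I` attaining the minimum at `ε`.
  obtain ⟨I, hI, hIeq⟩ := Finset.exists_mem_eq_inf' (Finset.powerset_nonempty E)
    (fun I => hU G (chTrans G (chTrans G K (dirVec v ε)) (fun u => if u ∈ I then (1 : ℤ) else 0)))
  have h0 : hUcube G K E ≤ _ := Finset.inf'_le _ hI
  have hm : hUcube G (chTrans G K (dirVec v (ε * n))) E ≤ _ := Finset.inf'_le _ hI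
  have h1 : hUcube G (chTrans G K (dirVec v ε)) E = _ := hIeq
  obtain ⟨a, b, hab⟩ :=
    exists_hU_eq_quadratic hsym hneg K (fun u => if u ∈ I then (1 : ℤ) else 0) v
  have hab0 := hab 0
  rw [dirVec_zero, chTrans_zero] at hab0
  rw [hab0] at h0
  rw [hab] at hm h1
  rw [h1]
  have hn' : (1 : ℚ) ≤ n := by exact_mod_cast hn
  have hε' : (ε : ℚ) ^ 2 = 1 := by exact_mod_cast hε
  have hg := hneg.diag_neg v
  push_cast at h0 hm
  rw [mul_pow, hε'] at hm
  rw [hε']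
  have h2 : ((n : ℚ) - 1) * hUcube G K E ≤ ((n : ℚ) - 1) * a :=
    mul_le_mul_of_nonneg_left (by linarith) (by linarith)
  -- The remaining defect is `G v v * (n - n ^ 2)`, a product of two nonpositive factors.
  have h3 : 0 ≤ -(G v v : ℚ) * (n * ((n : ℚ) - 1)) :=
    mul_nonneg (by linarith) (mul_nonneg (by linarith) (by linarith))
  linarith

lemma hUcube_insert [Fintype V] [DecidableEq V] (G : Matrix V V ℤ) (K : V → ℤ) {v : V}
    {E : Finset V} (hv : v ∉ E) :
    hUcube G K (insert v E) = min (hUcube G K E) (hUcube G (chTrans G K (dirVec v 1)) E) := by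
  -- Adding `v` to a subset `I` of `E` amounts to a translation by the basis vector of `v`.
  have key : ∀ I ⊆ E, chTrans G (chTrans G K (dirVec v 1)) (fun u => if u ∈ I then (1 : ℤ) else 0)
      = chTrans G K (fun u => if u ∈ insert v I then (1 : ℤ) else 0) := by
    intro I hI
    have hvI : v ∉ I := fun h => hv (hI h)
    rw [chTrans_chTrans]
    congr 1
    funext u
    by_cases h : u = v
    · subst h
      simp [dirVec, hvI]
    · simp [dirVec, h]
  apply le_antisymm
  · refine le_min (Finset.le_inf' _ _ fun I hI => ?_) (Finset.le_inf' _ _ fun I hI => ?_)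
    · exact Finset.inf'_le _
        (Finset.mem_powerset.mpr ((Finset.mem_powerset.mp hI).trans (Finset.subset_insert v E)))
    · rw [key I (Finset.mem_powerset.mp hI)]
      exact Finset.inf'_le (fun I => hU G (chTrans G K (fun u => if u ∈ I then (1 : ℤ) else 0)))
        (Finset.mem_powerset.mpr (Finset.insert_subset_insert v (Finset.mem_powerset.mp hI)))
  · refine Finset.le_inf' _ _ fun I hI => ?_
    rw [Finset.mem_powerset] at hI
    by_cases hvI : v ∈ I
    · have hsub : I.erase v ⊆ E := Finset.subset_insert_iff.mp hI
      have hle : hUcube G (chTrans G K (dirVec v 1)) E ≤ _ :=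
        Finset.inf'_le _ (Finset.mem_powerset.mpr hsub)
      rw [key _ hsub, Finset.insert_erase hvI] at hle
      exact (min_le_right _ _).trans hle
    · exact (min_le_left _ _).trans (Finset.inf'_le _
        (Finset.mem_powerset.mpr ((Finset.subset_insert_iff_of_notMem hvI).mp hI)))

/-- Lemma `ContractionsFiltered`: if `i₀` maximizes `i ↦ h_U([K+iv,E])`
(`v ∉ E`), then `i₀ > 0` implies `h_U([K,E∪{v}]) = h_U([K,E])` (equivalently
`h_U([K+v,E]) ≥ h_U([K,E])`), and `i₀ < 0` implies `h_U([K−v,E∪{v}]) = h_U([K,E])`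
(equivalently `h_U([K−v,E]) ≥ h_U([K,E])`). -/
theorem hUcube_maximum_direction [Fintype V] [DecidableEq V]
    (G : Matrix V V ℤ) (hsym : G.IsSymm) (hneg : MatNegDef G)
    (K : V → ℤ) (hK : IsCharacteristic G K) (v : V) (E : Finset V) (hv : v ∉ E)
    (i₀ : ℤ)
    (hmax : ∀ i : ℤ,
      hUcube G (chTrans G K (dirVec v i)) E ≤ hUcube G (chTrans G K (dirVec v i₀)) E) :
    (i₀ > 0 →
      hUcube G K (insert v E) = hUcube G K E ∧
      hUcube G (chTrans G K (dirVec v 1)) E ≥ hUcube G K E) ∧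
    (i₀ < 0 →
      hUcube G (chTrans G K (dirVec v (-1))) (insert v E) = hUcube G K E ∧
      hUcube G (chTrans G K (dirVec v (-1))) E ≥ hUcube G K E) := by
  have h0 := hmax 0
  rw [dirVec_zero, chTrans_zero] at h0
  -- The concavity inequality at `i₀ = ε * n`, combined with `f(i₀) ≥ f(0)`.
  have step : ∀ ε n : ℤ, ε ^ 2 = 1 → 1 ≤ n → ε * n = i₀ →
      hUcube G K E ≤ hUcube G (chTrans G K (dirVec v ε)) E := by
    intro ε n hε hn h
    have hc := hUcube_concave hsym hneg K v E hε hn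
    rw [h] at hc
    have hn' : (0 : ℚ) < n := by exact_mod_cast (by omega : 0 < n)
    exact le_of_mul_le_mul_left (by linarith) hn'
  refine ⟨fun hi => ?_, fun hi => ?_⟩
  · have h := step 1 i₀ (by norm_num) (by omega) (by ring)
    exact ⟨by rw [hUcube_insert G K hv, min_eq_left h], h⟩
  · have h := step (-1) (-i₀) (by norm_num) (by omega) (by ring)
    have hback : chTrans G (chTrans G K (dirVec v (-1))) (dirVec v 1) = K := by
      have hcancel : dirVec v (-1) + dirVec v 1 = 0 := by
        funext u
        by_cases hu : u = v <;> simp [dirVec, hu]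
      rw [chTrans_chTrans, hcancel, chTrans_zero]
    exact ⟨by rw [hUcube_insert G _ hv, hback, min_eq_right h], h⟩
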